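/- Let N ≥ 1 and let x, y ∈ ℝ^N have nonnegative components with ∑_{i=1}^N y_i > 0, and suppose x ≪ y. Then for every function f : ℝ → ℝ that is convex and nondecreasing on [0,∞), one has f(x_1)+⋯+f(x_N) ≤ f(y_1)+⋯+f(y_N). -/

import Mathlib

/-!
Strong majorization implies weak majorization. Writing `X k`, `Y k` for the sums of the `k` largest
components and `X`, `Y` for the full sums, the hypothesis `X k * (Y - Y k) ≤ Y k * (X - X k)` is
`X k * Y ≤ Y k * X`; since `0 ≤ Y k`, `X ≤ Y` and `0 < Y`, this gives `X k ≤ Y k`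
(`StronglyMajorized.weaklyMajorized`).

Weak majorization then gives the inequality (Tomić and Weyl). The function `f` on `[0, ∞)` has a
nonnegative nondecreasing subgradient `c` (`exists_subgradient`), so
`∑ i, (f y_[i] - f x_[i]) ≥ ∑ i, c x_[i] * (y_[i] - x_[i])`. The weights `c x_[i]` are nonnegative
and nonincreasing in `i`, and the partial sums of `y_[i] - x_[i]` are nonnegative, so by summation by
parts (`mul_sum_le_sum_mul`) the right-hand side is nonnegative.
-/

open Finset

/-- The decreasing rearrangement of `x`: `sortedDesc x i` is the `(i+1)`-th largest
component of the vector `x`. -/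
noncomputable def sortedDesc {N : ℕ} (x : Fin N → ℝ) : Fin N → ℝ :=
  fun i => x (Tuple.sort x i.rev)

/-- `partSum x k = ∑_{i=1}^{k} x_[i]`, the sum of the `k` largest components of `x`. -/
noncomputable def partSum {N : ℕ} (x : Fin N → ℝ) (k : ℕ) : ℝ :=
  ∑ i ∈ Finset.univ.filter (fun i : Fin N => (i : ℕ) < k), sortedDesc x i

/-- `x ≺* y`: `x` is weakly majorized by `y`. -/
def WeaklyMajorized {N : ℕ} (x y : Fin N → ℝ) : Prop :=
  ∀ k, 1 ≤ k → k ≤ N → partSum x k ≤ partSum y k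

/-- `x ≪ y`: `x` is strongly majorized by `y`, i.e. for each `k = 1, …, N-1`,
`(∑_{i=1}^k x_[i]) (∑_{i=k+1}^N y_[i]) ≤ (∑_{i=1}^k y_[i]) (∑_{i=k+1}^N x_[i])`,
and `∑ x_i ≤ ∑ y_i`. -/
def StronglyMajorized {N : ℕ} (x y : Fin N → ℝ) : Prop :=
  (∀ k, 1 ≤ k → k ≤ N - 1 →
    partSum x k * ((∑ i, y i) - partSum y k) ≤ partSum y k * ((∑ i, x i) - partSum x k)) ∧
  (∑ i, x i) ≤ (∑ i, y i)

theorem sortedDesc_antitone {N : ℕ} (x : Fin N → ℝ) : Antitone (sortedDesc x) :=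
  fun _ _ hij => Tuple.monotone_sort x (Fin.rev_le_rev.mpr hij)

theorem sum_comp_sortedDesc {N : ℕ} (x : Fin N → ℝ) (g : ℝ → ℝ) :
    ∑ i, g (sortedDesc x i) = ∑ i, g (x i) :=
  Equiv.sum_comp (Fin.revPerm.trans (Tuple.sort x)) (fun i => g (x i))

theorem partSum_self {N : ℕ} (x : Fin N → ℝ) : partSum x N = ∑ i, x i := by
  simpa [partSum] using sum_comp_sortedDesc x id

theorem StronglyMajorized.weaklyMajorized {N : ℕ} {x y : Fin N → ℝ} (hy : ∀ i, 0 ≤ y i)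
    (hpos : 0 < ∑ i, y i) (h : StronglyMajorized x y) : WeaklyMajorized x y := by
  intro k hk hkN
  rcases hkN.eq_or_lt with rfl | hlt
  · simpa only [partSum_self] using h.2
  · have hYk : 0 ≤ partSum y k := Finset.sum_nonneg fun i _ => hy _
    have h1 := h.1 k hk (by omega)
    have h2 := mul_le_mul_of_nonneg_left h.2 hYk
    exact le_of_mul_le_mul_right (by linarith) hpos

/-- Abel's inequality. The arbitrary lower bound `t` for the first `k` weights is what lets the
induction on `k` close: in the step it is replaced by the `k`-th weight. -/
theorem mul_sum_le_sum_mul {N : ℕ} {c d : Fin N → ℝ} (hc : Antitone c)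
    (hd : ∀ k, 1 ≤ k → k ≤ N → 0 ≤ ∑ i ∈ univ.filter (fun i : Fin N => (i : ℕ) < k), d i)
    (k : ℕ) (hk : k ≤ N) (t : ℝ) (ht : ∀ i : Fin N, (i : ℕ) < k → t ≤ c i) :
    t * ∑ i ∈ univ.filter (fun i : Fin N => (i : ℕ) < k), d i ≤
      ∑ i ∈ univ.filter (fun i : Fin N => (i : ℕ) < k), c i * d i := by
  induction k generalizing t with
  | zero => simp
  | succ k ih =>
    have hD := hd (k + 1) (by omega) hk
    have hset : univ.filter (fun i : Fin N => (i : ℕ) < k + 1) =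
        insert ⟨k, hk⟩ (univ.filter (fun i : Fin N => (i : ℕ) < k)) := by
      ext i
      simp only [mem_filter, mem_univ, true_and, mem_insert, Fin.ext_iff]
      omega
    have hstep := ih (by omega) (c ⟨k, hk⟩) fun i hi => hc (Fin.le_def.mpr hi.le)
    refine (mul_le_mul_of_nonneg_right (ht ⟨k, hk⟩ (Nat.lt_succ_self k)) hD).trans ?_
    rw [hset, sum_insert (by simp), sum_insert (by simp), mul_add]
    linarith

/-- Subgradients of a convex nondecreasing function on `[0, ∞)`, including at the endpoint `0`. They
are the right derivatives of the convex extension `z ↦ f (max z 0)` to the whole line, for which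
every point of `[0, ∞)` is interior. -/
theorem exists_subgradient {f : ℝ → ℝ} (hf : ConvexOn ℝ (Set.Ici 0) f)
    (hmono : MonotoneOn f (Set.Ici 0)) :
    ∃ c : ℝ → ℝ, Monotone c ∧ (∀ a, 0 ≤ c a) ∧
      ∀ a b, 0 ≤ a → 0 ≤ b → c a * (b - a) ≤ f b - f a := by
  let g : ℝ → ℝ := fun z => f (max z 0)
  have hmax : ConvexOn ℝ Set.univ (fun z : ℝ => max z 0) :=
    (convexOn_id convex_univ).sup (convexOn_const 0 convex_univ)
  have hg : ConvexOn ℝ Set.univ g := by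
    refine ⟨convex_univ, fun u _ v _ p q hp hq hpq => ?_⟩
    have hu : max u 0 ∈ Set.Ici (0 : ℝ) := le_max_right u 0
    have hv : max v 0 ∈ Set.Ici (0 : ℝ) := le_max_right v 0
    have huv : max (p • u + q • v) 0 ∈ Set.Ici (0 : ℝ) :=
      Set.mem_Ici.mpr (le_max_right _ _)
    exact (hmono huv (hf.1 hu hv hp hq hpq)
      (hmax.2 (Set.mem_univ u) (Set.mem_univ v) hp hq hpq)).trans (hf.2 hu hv hp hq hpq)
  have hgmono : Monotone g := fun u v huv =>
    hmono (le_max_right u 0) (le_max_right v 0) (max_le_max_right 0 huv)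
  have hint : ∀ a : ℝ, a ∈ interior (Set.univ : Set ℝ) := by simp
  refine ⟨fun a => derivWithin g (Set.Ioi a) a,
    fun a b hab => hg.monotoneOn_rightDeriv (hint a) (hint b) hab,
    fun a => (hgmono.monotoneOn _).derivWithin_nonneg, fun a b ha hb => ?_⟩
  have hga : g a = f a := by simp [g, ha]
  have hgb : g b = f b := by simp [g, hb]
  rw [← hga, ← hgb]
  rcases lt_trichotomy a b with hab | rfl | hba
  · have h := hg.rightDeriv_le_slope_of_mem_interior (hint a) (Set.mem_univ b) hab
    rwa [slope_def_field, le_div_iff₀ (sub_pos.mpr hab)] at h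
  · simp
  · have h := (hg.slope_le_leftDeriv_of_mem_interior (Set.mem_univ b) (hint a) hba).trans
      (hg.leftDeriv_le_rightDeriv_of_mem_interior (hint a))
    rw [slope_def_field, div_le_iff₀ (sub_pos.mpr hba)] at h
    linarith

/-- If `x ≪ y` and `f` is convex and nondecreasing on `[0,∞)`, then
`f(x₁)+⋯+f(x_N) ≤ f(y₁)+⋯+f(y_N)`. -/
theorem strongly_majorized_sum_le_of_convex_monotone {N : ℕ} (hN : 1 ≤ N)
    (x y : Fin N → ℝ) (hx : ∀ i, 0 ≤ x i) (hy : ∀ i, 0 ≤ y i)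
    (hpos : 0 < ∑ i, y i) (h : StronglyMajorized x y)
    (f : ℝ → ℝ) (hf : ConvexOn ℝ (Set.Ici 0) f)
    (hmono : MonotoneOn f (Set.Ici 0)) :
    (∑ i, f (x i)) ≤ (∑ i, f (y i)) := by
  obtain ⟨c, hcmono, hc0, hsub⟩ := exists_subgradient hf hmono
  have hw := h.weaklyMajorized hy hpos
  have habel := mul_sum_le_sum_mul (c := fun i => c (sortedDesc x i))
    (d := fun i => sortedDesc y i - sortedDesc x i)
    (fun i j hij => hcmono (sortedDesc_antitone x hij))
    (fun k hk hkN => by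
      rw [sum_sub_distrib]
      exact sub_nonneg.mpr (hw k hk hkN))
    N le_rfl 0 (fun i _ => hc0 _)
  have htangent := Finset.sum_le_sum fun i (_ : i ∈ univ) =>
    hsub (sortedDesc x i) (sortedDesc y i) (hx _) (hy _)
  simp only [Fin.is_lt, filter_true, zero_mul] at habel
  rw [sum_sub_distrib, sum_comp_sortedDesc, sum_comp_sortedDesc] at htangent
  linarith
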